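/- Let ρ*(t) = (3/2)√(1−t) for t ∈ [0,1]. Then ρ* satisfies t = 1 − (4/9)·ρ*(t)² for all t ∈ [0,1], one has ∫_0^x 1/ρ*(t) dt = (4/3)·(1 − √(1−x)) for all x ∈ [0,1], and ∫_0^1 ( ∫_0^x 1/ρ*(t) dt ) dx = 4/9 = (1/(p+1))·((p+2)/(p+1))^{p/2} with p = 2; in particular ρ* attains the minimal value of the functional J(ρ) = ∫_0^1 ( ∫_0^x 1/ρ(t) dt ) dx over all probability densities ρ on [0,1]. -/

import Mathlib

open MeasureTheory ENNReal

/-!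
Exchanging the order of integration gives `J(ρ) = ∫₀¹ (1 - t) / ρ(t) dt`, and the Cauchy–Schwarz
inequality `(∫ f)² / ∫ ρ ≤ ∫ f² / ρ` with `f(t) = √(1 - t)` bounds this below by
`(∫₀¹ √(1 - t) dt)² = (2/3)² = 4/9`. Equality forces `ρ` to be proportional to `f`, which is how
`ρ*` arises.
-/

section CauchySchwarz

lemma ennreal_two_mul_le_add_sq (a b : ℝ≥0∞) : 2 * a * b ≤ a ^ 2 + b ^ 2 := by
  wlog hab : a ≤ b generalizing a b
  · rw [mul_right_comm, add_comm]
    exact this b a (le_of_not_ge hab)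
  obtain ⟨d, rfl⟩ := exists_add_of_le hab
  calc 2 * a * (a + d) ≤ 2 * a * (a + d) + d ^ 2 := le_self_add
    _ = a ^ 2 + (a + d) ^ 2 := by ring

lemma ennreal_div_sq_mul_self {u r : ℝ≥0∞} (hr : r ≠ 0) (hr_top : r ≠ ⊤) :
    (u / r) ^ 2 * r = u ^ 2 / r := by
  rw [sq, mul_assoc, ENNReal.div_mul_cancel hr hr_top, sq, ENNReal.mul_div_right_comm]

lemma ennreal_two_mul_le_sq_div_add_sq_mul (c u r : ℝ≥0∞) :
    2 * c * u ≤ u ^ 2 / r + c ^ 2 * r := by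
  rcases eq_or_ne u 0 with rfl | hu
  · simp
  rcases eq_or_ne c 0 with rfl | hc
  · simp
  rcases eq_or_ne r 0 with rfl | hr
  · simp [ENNReal.div_zero (pow_ne_zero 2 hu)]
  rcases eq_or_ne r ⊤ with rfl | hr_top
  · simp [ENNReal.mul_top (pow_ne_zero 2 hc)]
  calc 2 * c * u = 2 * c * (u / r * r) := by rw [ENNReal.div_mul_cancel hr hr_top]
    _ = 2 * (u / r) * c * r := by ring
    _ ≤ ((u / r) ^ 2 + c ^ 2) * r := by gcongr; exact ennreal_two_mul_le_add_sq _ _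
    _ = u ^ 2 / r + c ^ 2 * r := by rw [add_mul, ennreal_div_sq_mul_self hr hr_top]

variable {α : Type*} [MeasurableSpace α] {μ : Measure α}

lemma two_mul_lintegral_le_lintegral_sq_div_add (f : α → ℝ≥0∞) {ρ : α → ℝ≥0∞}
    (hρ : AEMeasurable ρ μ) (c : ℝ≥0∞) :
    2 * c * ∫⁻ x, f x ∂μ ≤ ∫⁻ x, f x ^ 2 / ρ x ∂μ + c ^ 2 * ∫⁻ x, ρ x ∂μ :=
  calc 2 * c * ∫⁻ x, f x ∂μ ≤ ∫⁻ x, 2 * c * f x ∂μ := lintegral_const_mul_le _ _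
    _ ≤ ∫⁻ x, (f x ^ 2 / ρ x + c ^ 2 * ρ x) ∂μ :=
      lintegral_mono fun x ↦ ennreal_two_mul_le_sq_div_add_sq_mul c (f x) (ρ x)
    _ = ∫⁻ x, f x ^ 2 / ρ x ∂μ + c ^ 2 * ∫⁻ x, ρ x ∂μ := by
      rw [lintegral_add_right' _ (hρ.const_mul _), lintegral_const_mul'' _ hρ]

-- Stated as a quotient, the inequality survives the degenerate values `0` and `∞` of `ρ` and of
-- the integrals; `(∫ f)² ≤ (∫ f² / ρ) * ∫ ρ` fails for `ρ = 0`.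
lemma sq_lintegral_div_lintegral_le_lintegral_sq_div (f : α → ℝ≥0∞) {ρ : α → ℝ≥0∞}
    (hρ : AEMeasurable ρ μ) :
    (∫⁻ x, f x ∂μ) ^ 2 / ∫⁻ x, ρ x ∂μ ≤ ∫⁻ x, f x ^ 2 / ρ x ∂μ := by
  have key := two_mul_lintegral_le_lintegral_sq_div_add f hρ
  set F := ∫⁻ x, f x ∂μ
  set R := ∫⁻ x, ρ x ∂μ
  set X := ∫⁻ x, f x ^ 2 / ρ x ∂μ
  rcases eq_or_ne F 0 with hF | hF
  · simp [hF]
  rcases eq_or_ne R ⊤ with hR_top | hR_top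
  · simp [hR_top]
  rcases eq_or_ne R 0 with hR | hR
  · have hX : X = ⊤ := by simpa [hR, hF] using key ⊤
    exact hX ▸ le_top
  rcases eq_or_ne F ⊤ with hF_top | hF_top
  · have hX : X = ⊤ := by simpa [hF_top, hR_top] using key 1
    exact hX ▸ le_top
  have hFR_top : F ^ 2 / R ≠ ⊤ := ENNReal.div_ne_top (pow_ne_top hF_top) hR
  -- `c = F / R` is where the quadratic bound in `c` is sharpest.
  have hopt : F ^ 2 / R + F ^ 2 / R ≤ X + F ^ 2 / R := by
    calc F ^ 2 / R + F ^ 2 / R = 2 * (F / R) * F := by simp only [div_eq_mul_inv]; ring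
      _ ≤ X + (F / R) ^ 2 * R := key (F / R)
      _ = X + F ^ 2 / R := by rw [ennreal_div_sq_mul_self hR hR_top]
  exact (ENNReal.add_le_add_iff_right hFR_top).1 hopt

end CauchySchwarz

section Exchange

variable {α : Type*} [LinearOrder α] [TopologicalSpace α] [OrderClosedTopology α]
  [SecondCountableTopology α] [MeasurableSpace α] [OpensMeasurableSpace α]

lemma setLIntegral_Icc_setLIntegral_Ico (μ ν : Measure α) [SFinite μ] [SFinite ν] (a b : α)
    {g : α → ℝ≥0∞} (hg : AEMeasurable g (ν.restrict (Set.Icc a b))) :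
    ∫⁻ x in Set.Icc a b, ∫⁻ t in Set.Ico a x, g t ∂ν ∂μ
      = ∫⁻ t in Set.Icc a b, μ (Set.Ioc t b) * g t ∂ν := by
  let h : α → α → ℝ≥0∞ := fun x t ↦ {p : α × α | p.2 < p.1}.indicator (fun p ↦ g p.2) (x, t)
  have hh : AEMeasurable (Function.uncurry h)
      ((μ.restrict (Set.Icc a b)).prod (ν.restrict (Set.Icc a b))) :=
    hg.comp_snd.indicator (measurableSet_lt measurable_snd measurable_fst)
  have inner_left : ∀ x ∈ Set.Icc a b,
      ∫⁻ t in Set.Ico a x, g t ∂ν = ∫⁻ t in Set.Icc a b, h x t ∂ν := by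
    intro x hx
    have hset : Set.Iio x ∩ Set.Icc a b = Set.Ico a x := by
      ext t; grind
    rw [← hset, ← Measure.restrict_restrict measurableSet_Iio,
      ← lintegral_indicator measurableSet_Iio]
    rfl
  have inner_right : ∀ t ∈ Set.Icc a b,
      ∫⁻ x in Set.Icc a b, h x t ∂μ = μ (Set.Ioc t b) * g t := by
    intro t ht
    have hset : Set.Ioi t ∩ Set.Icc a b = Set.Ioc t b := by
      ext x; grind
    rw [← hset, mul_comm, ← Measure.restrict_apply measurableSet_Ioi,
      ← lintegral_indicator_const measurableSet_Ioi]
    rfl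
  rw [setLIntegral_congr_fun measurableSet_Icc inner_left, lintegral_lintegral_swap hh,
    setLIntegral_congr_fun measurableSet_Icc inner_right]

end Exchange

lemma integral_sqrt {a b : ℝ} (ha : 0 ≤ a) (hb : 0 ≤ b) :
    ∫ x in a..b, √x = 2 / 3 * (√b ^ 3 - √a ^ 3) := by
  have rpow_eq_sqrt_cube {y : ℝ} (hy : 0 ≤ y) : y ^ (1 / 2 + 1 : ℝ) = √y ^ 3 := by
    rw [Real.sqrt_eq_rpow, ← Real.rpow_mul_natCast hy]
    norm_num
  calc ∫ x in a..b, √x = (b ^ (1 / 2 + 1 : ℝ) - a ^ (1 / 2 + 1 : ℝ)) / (1 / 2 + 1) := by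
        simp only [Real.sqrt_eq_rpow]
        exact integral_rpow (Or.inl (by norm_num))
    _ = 2 / 3 * (√b ^ 3 - √a ^ 3) := by
        rw [rpow_eq_sqrt_cube ha, rpow_eq_sqrt_cube hb]
        ring

lemma integral_inv_sqrt {a b : ℝ} (ha : 0 ≤ a) (hb : 0 ≤ b) :
    ∫ x in a..b, (√x)⁻¹ = 2 * (√b - √a) := by
  have inv_sqrt_eq : Set.EqOn (fun x ↦ (√x)⁻¹) (fun x ↦ x ^ (-(1 / 2) : ℝ)) (Set.uIcc a b) := by
    intro x hx
    have hx0 : 0 ≤ x := (le_min ha hb).trans hx.1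
    simp only [Real.sqrt_eq_rpow, Real.rpow_neg hx0]
  have half : (-(1 / 2) + 1 : ℝ) = 1 / 2 := by norm_num
  rw [intervalIntegral.integral_congr inv_sqrt_eq, integral_rpow (Or.inl (by norm_num)), half,
    ← Real.sqrt_eq_rpow, ← Real.sqrt_eq_rpow]
  ring

lemma integral_sqrt_const_sub {a b : ℝ} (hab : a ≤ b) :
    ∫ t in a..b, √(b - t) = 2 / 3 * √(b - a) ^ 3 := by
  rw [intervalIntegral.integral_comp_sub_left (fun x ↦ √x), sub_self,
    integral_sqrt le_rfl (sub_nonneg.2 hab)]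
  simp

lemma setLIntegral_sqrt_const_sub {a b : ℝ} (hab : a ≤ b) :
    ∫⁻ t in Set.Icc a b, ENNReal.ofReal √(b - t) = ENNReal.ofReal (2 / 3 * √(b - a) ^ 3) := by
  rw [← integral_sqrt_const_sub hab, intervalIntegral.integral_of_le hab,
    ← integral_Icc_eq_integral_Ioc, ofReal_integral_eq_lintegral_ofReal]
  · exact ContinuousOn.integrableOn_Icc (by fun_prop)
  · exact Filter.Eventually.of_forall fun t ↦ Real.sqrt_nonneg _

lemma ofReal_sub_cube_div_lintegral_le_lintegral_lintegral_one_div {a b : ℝ} (hab : a ≤ b)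
    {ρ : ℝ → ℝ≥0∞} (hρ : AEMeasurable ρ (volume.restrict (Set.Icc a b))) :
    ENNReal.ofReal (4 / 9 * (b - a) ^ 3) / ∫⁻ t in Set.Icc a b, ρ t
      ≤ ∫⁻ x in Set.Icc a b, ∫⁻ t in Set.Ico a x, 1 / ρ t := by
  have hba : 0 ≤ b - a := sub_nonneg.2 hab
  have sq_mass : ENNReal.ofReal (4 / 9 * (b - a) ^ 3)
      = (∫⁻ t in Set.Icc a b, ENNReal.ofReal √(b - t)) ^ 2 := by
    rw [setLIntegral_sqrt_const_sub hab, ← ENNReal.ofReal_pow (by positivity), mul_pow,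
      pow_right_comm, Real.sq_sqrt hba]
    norm_num
  have weight : ∀ t ∈ Set.Icc a b,
      ENNReal.ofReal √(b - t) ^ 2 / ρ t = volume (Set.Ioc t b) * (1 / ρ t) := by
    intro t ht
    rw [← ENNReal.ofReal_pow (Real.sqrt_nonneg _), Real.sq_sqrt (sub_nonneg.2 ht.2),
      Real.volume_Ioc, mul_one_div]
  rw [sq_mass, setLIntegral_Icc_setLIntegral_Ico volume volume a b (by fun_prop),
    ← setLIntegral_congr_fun measurableSet_Icc weight]
  exact sq_lintegral_div_lintegral_le_lintegral_sq_div _ hρ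

/-- The optimal one-dimensional sampling density `ρ*` for `p = 2`, extended to `ℝ`. It vanishes on
`[1, ∞)`, where `√` of a nonpositive number is `0`. -/
noncomputable def optimalDensity (t : ℝ) : ℝ := 3 / 2 * √(1 - t)

lemma eq_one_sub_sq_optimalDensity {t : ℝ} (ht : t ≤ 1) :
    t = 1 - 4 / 9 * optimalDensity t ^ 2 := by
  rw [optimalDensity, mul_pow, Real.sq_sqrt (sub_nonneg.2 ht)]
  ring

lemma setIntegral_one_div_optimalDensity {x : ℝ} (hx : x ∈ Set.Icc (0 : ℝ) 1) :
    ∫ t in Set.Ico 0 x, 1 / optimalDensity t = 4 / 3 * (1 - √(1 - x)) := by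
  calc ∫ t in Set.Ico 0 x, 1 / optimalDensity t
      = ∫ t in (0 : ℝ)..x, 2 / 3 * (√(1 - t))⁻¹ := by
        rw [integral_Ico_eq_integral_Ioc, ← intervalIntegral.integral_of_le hx.1]
        simp only [optimalDensity, one_div, mul_inv, inv_div]
    _ = 2 / 3 * ∫ s in (1 - x)..1, (√s)⁻¹ := by
        rw [intervalIntegral.integral_const_mul,
          intervalIntegral.integral_comp_sub_left (fun s ↦ (√s)⁻¹), sub_zero]
    _ = 4 / 3 * (1 - √(1 - x)) := by
        rw [integral_inv_sqrt (sub_nonneg.2 hx.2) zero_le_one, Real.sqrt_one]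
        ring

lemma setIntegral_setIntegral_one_div_optimalDensity :
    ∫ x in Set.Icc (0 : ℝ) 1, ∫ t in Set.Ico 0 x, 1 / optimalDensity t = 4 / 9 := by
  calc ∫ x in Set.Icc (0 : ℝ) 1, ∫ t in Set.Ico 0 x, 1 / optimalDensity t
      = ∫ x in (0 : ℝ)..1, 4 / 3 * (1 - √(1 - x)) := by
        rw [setIntegral_congr_fun measurableSet_Icc
            fun x hx ↦ setIntegral_one_div_optimalDensity hx,
          integral_Icc_eq_integral_Ioc, intervalIntegral.integral_of_le zero_le_one]
    _ = 4 / 3 * (1 - ∫ x in (0 : ℝ)..1, √(1 - x)) := by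
        rw [intervalIntegral.integral_const_mul, intervalIntegral.integral_sub (by simp)
          (Continuous.intervalIntegrable (by fun_prop) _ _), integral_one, sub_zero]
    _ = 4 / 9 := by
        rw [integral_sqrt_const_sub zero_le_one]
        norm_num

/-- For `ρ*(t) = (3/2)√(1-t)` one has `t = 1 - (4/9)ρ*(t)²`,
`∫_0^x 1/ρ* = (4/3)(1 - √(1-x))`, and
`∫_0^1 (∫_0^x 1/ρ*) dx = 4/9 = (1/(p+1))((p+2)/(p+1))^{p/2}` with `p = 2`;
in particular `ρ*` attains the minimal value of `J(ρ) = ∫_0^1 (∫_0^x 1/ρ) dx`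
over all probability densities on `[0,1]`. -/
theorem optimal_density_p_two_attains_min
    (ρstar : ℝ → ℝ)
    (hρ : ∀ t, ρstar t = (3 / 2) * Real.sqrt (1 - t)) :
    (∀ t ∈ Set.Icc (0 : ℝ) 1, t = 1 - (4 / 9) * ρstar t ^ 2) ∧
    (∀ x ∈ Set.Icc (0 : ℝ) 1,
        (∫ t in Set.Ico (0 : ℝ) x, 1 / ρstar t)
          = (4 / 3) * (1 - Real.sqrt (1 - x))) ∧
    (∫ x in Set.Icc (0 : ℝ) 1, ∫ t in Set.Ico (0 : ℝ) x, 1 / ρstar t)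
      = 4 / 9 ∧
    (4 / 9 : ℝ) = (1 / (2 + 1)) * ((2 + 2) / (2 + 1) : ℝ) ^ ((2 : ℝ) / 2) ∧
    (∀ ρ : ℝ → ℝ≥0∞, Measurable ρ →
        (∫⁻ t in Set.Icc (0 : ℝ) 1, ρ t) = 1 →
        ENNReal.ofReal (4 / 9)
          ≤ ∫⁻ x in Set.Icc (0 : ℝ) 1, ∫⁻ t in Set.Ico (0 : ℝ) x, 1 / ρ t) := by
  obtain rfl : ρstar = optimalDensity := funext hρ
  refine ⟨fun t ht ↦ eq_one_sub_sq_optimalDensity ht.2,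
    fun x hx ↦ setIntegral_one_div_optimalDensity hx,
    setIntegral_setIntegral_one_div_optimalDensity, by norm_num, fun ρ hρ_meas hρ_mass ↦ ?_⟩
  simpa [hρ_mass] using
    ofReal_sub_cube_div_lintegral_le_lintegral_lintegral_one_div zero_le_one
      hρ_meas.aemeasurable
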